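/- Along the cycle chart, the second fundamental form coefficients with respect to N and B at v = 0 satisfy, for every u: ⟨α_uu(u,0), N(u)⟩ = k(u), ⟨α_uv(u,0), N(u)⟩ = −τ_N(u), ⟨α_vv(u,0), N(u)⟩ = K(u), ⟨α_uu(u,0), B(u)⟩ = k_B(u), ⟨α_uv(u,0), B(u)⟩ = −τ(u), and ⟨α_vv(u,0), B(u)⟩ = K̄(u). -/

import Mathlib

/-!
On the cycle itself the first derivatives of the chart are elements of the frame,
`α_u(u,0) = c'(u) = t(u)` and `α_v(u,0) = T(u)`, because the `N` and `B` coefficients of the chart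
vanish to second order in `v`. Differentiating these identities along the cycle, and using the
symmetry of second derivatives for the mixed one, gives `α_uu(u,0) = t'(u)` and
`α_uv(u,0) = T'(u)`, whose `N` and `B` components are read off from the Darboux equations.
For `α_vv(u,0)` only the quadratic terms of the coefficients survive (`hasDerivAt_coeff_zero`),
so it equals `K(u) N(u) + K̄(u) B(u)`.
-/

noncomputable section

open scoped RealInnerProductSpace

abbrev E4 : Type := EuclideanSpace ℝ (Fin 4)

/-- Partial derivative with respect to the first variable `u`. -/
def pdu {X : Type*} [NormedAddCommGroup X] [NormedSpace ℝ X]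
    (f : ℝ × ℝ → X) (p : ℝ × ℝ) : X := fderiv ℝ f p (1, 0)

/-- Partial derivative with respect to the second variable `v`. -/
def pdv {X : Type*} [NormedAddCommGroup X] [NormedSpace ℝ X]
    (f : ℝ × ℝ → X) (p : ℝ × ℝ) : X := fderiv ℝ f p (0, 1)

/-- The wedge `x ∧ y ∧ z` of three vectors of `ℝ⁴`: the unique vector satisfying
`⟪x ∧ y ∧ z, w⟫ = det (x, y, z, w)` for all `w ∈ ℝ⁴`. -/
def wedge (x y z : E4) : E4 :=
  (WithLp.equiv 2 (Fin 4 → ℝ)).symm fun i =>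
    Matrix.det (Matrix.of ![(x : Fin 4 → ℝ), y, z, fun j => if j = i then 1 else 0])

namespace Cycle

/-- Coefficient `E` of the first fundamental form. -/
def Ec (α : ℝ × ℝ → E4) (p : ℝ × ℝ) : ℝ := ⟪pdu α p, pdu α p⟫
/-- Coefficient `F` of the first fundamental form. -/
def Fc (α : ℝ × ℝ → E4) (p : ℝ × ℝ) : ℝ := ⟪pdu α p, pdv α p⟫
/-- Coefficient `G` of the first fundamental form. -/
def Gc (α : ℝ × ℝ → E4) (p : ℝ × ℝ) : ℝ := ⟪pdv α p, pdv α p⟫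

/-- `x₁ = ⟨α_u, t⟩`. -/
def x1 (α : ℝ × ℝ → E4) (t : ℝ → E4) (p : ℝ × ℝ) : ℝ := ⟪pdu α p, t p.1⟫
/-- `x₂ = ⟨α_u, T⟩`. -/
def x2 (α : ℝ × ℝ → E4) (T : ℝ → E4) (p : ℝ × ℝ) : ℝ := ⟪pdu α p, T p.1⟫
/-- `x₃ = ⟨α_u, N⟩`. -/
def x3 (α : ℝ × ℝ → E4) (N : ℝ → E4) (p : ℝ × ℝ) : ℝ := ⟪pdu α p, N p.1⟫
/-- `y₁ = ⟨α_v, N⟩`. -/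
def y1 (α : ℝ × ℝ → E4) (N : ℝ → E4) (p : ℝ × ℝ) : ℝ := ⟪pdv α p, N p.1⟫

/-- `B̄₁ = (y₁x₂ − x₃)t − x₁y₁T + x₁N`. -/
def Bb1 (α : ℝ × ℝ → E4) (t T N : ℝ → E4) (p : ℝ × ℝ) : E4 :=
  (y1 α N p * x2 α T p - x3 α N p) • t p.1 - (x1 α t p * y1 α N p) • T p.1 + x1 α t p • N p.1

/-- `B̄₂ = α_u ∧ α_v ∧ B̄₁`. -/
def Bb2 (α : ℝ × ℝ → E4) (t T N : ℝ → E4) (p : ℝ × ℝ) : E4 :=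
  wedge (pdu α p) (pdv α p) (Bb1 α t T N p)

/-- `N₁ = B̄₁/|B̄₁|`. -/
def N1 (α : ℝ × ℝ → E4) (t T N : ℝ → E4) (p : ℝ × ℝ) : E4 :=
  ‖Bb1 α t T N p‖⁻¹ • Bb1 α t T N p

/-- `N₂ = B̄₂/|B̄₂|`. -/
def N2 (α : ℝ × ℝ → E4) (t T N : ℝ → E4) (p : ℝ × ℝ) : E4 :=
  ‖Bb2 α t T N p‖⁻¹ • Bb2 α t T N p

def e1 (α : ℝ × ℝ → E4) (t T N : ℝ → E4) (p : ℝ × ℝ) : ℝ := ⟪pdu (pdu α) p, N1 α t T N p⟫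
def f1 (α : ℝ × ℝ → E4) (t T N : ℝ → E4) (p : ℝ × ℝ) : ℝ := ⟪pdv (pdu α) p, N1 α t T N p⟫
def g1 (α : ℝ × ℝ → E4) (t T N : ℝ → E4) (p : ℝ × ℝ) : ℝ := ⟪pdv (pdv α) p, N1 α t T N p⟫
def e2 (α : ℝ × ℝ → E4) (t T N : ℝ → E4) (p : ℝ × ℝ) : ℝ := ⟪pdu (pdu α) p, N2 α t T N p⟫
def f2 (α : ℝ × ℝ → E4) (t T N : ℝ → E4) (p : ℝ × ℝ) : ℝ := ⟪pdv (pdu α) p, N2 α t T N p⟫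
def g2 (α : ℝ × ℝ → E4) (t T N : ℝ → E4) (p : ℝ × ℝ) : ℝ := ⟪pdv (pdv α) p, N2 α t T N p⟫

/-- `H̃₁ = (E g₁ − 2F f₁ + G e₁)/(2(EG − F²))`. -/
def Ht1 (α : ℝ × ℝ → E4) (t T N : ℝ → E4) (p : ℝ × ℝ) : ℝ :=
  (Ec α p * g1 α t T N p - 2 * Fc α p * f1 α t T N p + Gc α p * e1 α t T N p) /
    (2 * (Ec α p * Gc α p - Fc α p ^ 2))

/-- `H̃₂ = (E g₂ − 2F f₂ + G e₂)/(2(EG − F²))`. -/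
def Ht2 (α : ℝ × ℝ → E4) (t T N : ℝ → E4) (p : ℝ × ℝ) : ℝ :=
  (Ec α p * g2 α t T N p - 2 * Fc α p * f2 α t T N p + Gc α p * e2 α t T N p) /
    (2 * (Ec α p * Gc α p - Fc α p ^ 2))

/-- The mean curvature vector `H = H̃₁N₁ + H̃₂N₂`. -/
def Hvec (α : ℝ × ℝ → E4) (t T N : ℝ → E4) (p : ℝ × ℝ) : E4 :=
  Ht1 α t T N p • N1 α t T N p + Ht2 α t T N p • N2 α t T N p

def eH (α : ℝ × ℝ → E4) (t T N : ℝ → E4) (p : ℝ × ℝ) : ℝ := ⟪pdu (pdu α) p, Hvec α t T N p⟫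
def fH (α : ℝ × ℝ → E4) (t T N : ℝ → E4) (p : ℝ × ℝ) : ℝ := ⟪pdv (pdu α) p, Hvec α t T N p⟫
def gH (α : ℝ × ℝ → E4) (t T N : ℝ → E4) (p : ℝ × ℝ) : ℝ := ⟪pdv (pdv α) p, Hvec α t T N p⟫

end Cycle

open Cycle

section PartialDerivatives

variable {X : Type*} [NormedAddCommGroup X] [NormedSpace ℝ X]

theorem hasDerivAt_pdu {f : ℝ × ℝ → X} {u v : ℝ} (hf : DifferentiableAt ℝ f (u, v)) :
    HasDerivAt (fun s => f (s, v)) (pdu f (u, v)) u :=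
  HasFDerivAt.comp_hasDerivAt u hf.hasFDerivAt
    ((hasDerivAt_id u).prodMk (hasDerivAt_const u v))

theorem hasDerivAt_pdv {f : ℝ × ℝ → X} {u v : ℝ} (hf : DifferentiableAt ℝ f (u, v)) :
    HasDerivAt (fun s => f (u, s)) (pdv f (u, v)) v :=
  HasFDerivAt.comp_hasDerivAt v hf.hasFDerivAt
    ((hasDerivAt_const v u).prodMk (hasDerivAt_id v))

theorem contDiff_pdu {f : ℝ × ℝ → X} (hf : ContDiff ℝ (⊤ : ℕ∞) f) :
    ContDiff ℝ (⊤ : ℕ∞) (pdu f) :=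
  (hf.fderiv_right (m := (⊤ : ℕ∞)) (by simp)).clm_apply contDiff_const

theorem contDiff_pdv {f : ℝ × ℝ → X} (hf : ContDiff ℝ (⊤ : ℕ∞) f) :
    ContDiff ℝ (⊤ : ℕ∞) (pdv f) :=
  (hf.fderiv_right (m := (⊤ : ℕ∞)) (by simp)).clm_apply contDiff_const

theorem pdv_pdu_comm {f : ℝ × ℝ → X} (hf : ContDiff ℝ (⊤ : ℕ∞) f) (p : ℝ × ℝ) :
    pdv (pdu f) p = pdu (pdv f) p := by
  have hd : DifferentiableAt ℝ (fderiv ℝ f) p :=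
    ((hf.fderiv_right (m := (⊤ : ℕ∞)) (by simp)).differentiable (by simp)) p
  have key : ∀ w z : ℝ × ℝ, fderiv ℝ (fun q => fderiv ℝ f q w) p z
      = fderiv ℝ (fderiv ℝ f) p z w := by
    intro w z
    rw [fderiv_clm_apply hd (differentiableAt_const w)]
    simp
  have hs : IsSymmSndFDerivAt ℝ f p :=
    hf.contDiffAt.isSymmSndFDerivAt (by simpa using WithTop.coe_le_coe.2 (le_top : (2 : ℕ∞) ≤ ⊤))
  change fderiv ℝ (fun q => fderiv ℝ f q (1, 0)) p (0, 1)
    = fderiv ℝ (fun q => fderiv ℝ f q (0, 1)) p (1, 0)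
  rw [key, key]
  exact hs _ _

end PartialDerivatives

/-- First `v`-derivative of the `N` or `B` coefficient of the chart, with `u` fixed, `κ` and `β`
the values of its quadratic and cubic coefficients, and `q` the slice of `A` or `Ā`. -/
theorem hasDerivAt_coeff (κ β : ℝ) {q : ℝ → ℝ} (hq : ContDiff ℝ (⊤ : ℕ∞) q) (v : ℝ) :
    HasDerivAt (fun v => κ * v ^ 2 / 2 + β * v ^ 3 / 6 + v ^ 3 * q v)
      (κ * v + v ^ 2 * (β / 2 + 3 * q v + v * deriv q v)) v := by
  have h1 := (((hasDerivAt_pow 2 v).const_mul κ).div_const 2).add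
    (((hasDerivAt_pow 3 v).const_mul β).div_const 6)
  have h2 := (hasDerivAt_pow 3 v).mul ((hq.differentiable (by simp)) v).hasDerivAt
  refine (h1.add h2).congr_deriv ?_
  norm_num
  ring

/-- The second derivative at `0` of a coefficient of the chart: in the first derivative from
`hasDerivAt_coeff`, everything except the linear term `κ v` vanishes to second order. -/
theorem hasDerivAt_coeff_zero (κ β : ℝ) {q : ℝ → ℝ} (hq : ContDiff ℝ (⊤ : ℕ∞) q) :
    HasDerivAt (fun v => κ * v + v ^ 2 * (β / 2 + 3 * q v + v * deriv q v)) κ 0 := by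
  have hq' : Differentiable ℝ (deriv q) :=
    ((contDiff_infty_iff_deriv.1 hq).2).differentiable (by simp)
  have hq0 : Differentiable ℝ q := hq.differentiable (by simp)
  have hr : DifferentiableAt ℝ (fun v => β / 2 + 3 * q v + v * deriv q v) 0 := by fun_prop
  have h := ((hasDerivAt_id (0 : ℝ)).const_mul κ).add ((hasDerivAt_pow 2 (0 : ℝ)).mul hr.hasDerivAt)
  refine h.congr_deriv ?_
  simp

/-- second fundamental form coefficients with respect to `N` and `B` at `v = 0`:
`⟨α_uu, N⟩ = k`, `⟨α_uv, N⟩ = −τ_N`, `⟨α_vv, N⟩ = K`, `⟨α_uu, B⟩ = k_B`, `⟨α_uv, B⟩ = −τ`,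
`⟨α_vv, B⟩ = K̄`. -/
theorem stmt11
    (L : ℝ) (hL : 0 < L)
    (t T N B c : ℝ → E4) (kg k kB τN τ τB K Kb a b : ℝ → ℝ) (A Ab : ℝ × ℝ → ℝ)
    (htsm : ContDiff ℝ (⊤ : ℕ∞) t) (hTsm : ContDiff ℝ (⊤ : ℕ∞) T) (hNsm : ContDiff ℝ (⊤ : ℕ∞) N)
    (hBsm : ContDiff ℝ (⊤ : ℕ∞) B) (hcsm : ContDiff ℝ (⊤ : ℕ∞) c)
    (hkgsm : ContDiff ℝ (⊤ : ℕ∞) kg) (hksm : ContDiff ℝ (⊤ : ℕ∞) k) (hkBsm : ContDiff ℝ (⊤ : ℕ∞) kB)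
    (hτNsm : ContDiff ℝ (⊤ : ℕ∞) τN) (hτsm : ContDiff ℝ (⊤ : ℕ∞) τ) (hτBsm : ContDiff ℝ (⊤ : ℕ∞) τB)
    (hKsm : ContDiff ℝ (⊤ : ℕ∞) K) (hKbsm : ContDiff ℝ (⊤ : ℕ∞) Kb) (hasm : ContDiff ℝ (⊤ : ℕ∞) a)
    (hbsm : ContDiff ℝ (⊤ : ℕ∞) b) (hAsm : ContDiff ℝ (⊤ : ℕ∞) A) (hAbsm : ContDiff ℝ (⊤ : ℕ∞) Ab)
    (htper : Function.Periodic t L) (hTper : Function.Periodic T L)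
    (hNper : Function.Periodic N L) (hBper : Function.Periodic B L)
    (hcper : Function.Periodic c L)
    (hkgper : Function.Periodic kg L) (hkper : Function.Periodic k L)
    (hkBper : Function.Periodic kB L) (hτNper : Function.Periodic τN L)
    (hτper : Function.Periodic τ L) (hτBper : Function.Periodic τB L)
    (hKper : Function.Periodic K L) (hKbper : Function.Periodic Kb L)
    (haper : Function.Periodic a L) (hbper : Function.Periodic b L)
    (hAper : ∀ u v : ℝ, A (u + L, v) = A (u, v)) (hAbper : ∀ u v : ℝ, Ab (u + L, v) = Ab (u, v))
    (hortho : ∀ u : ℝ, ⟪t u, t u⟫ = 1 ∧ ⟪T u, T u⟫ = 1 ∧ ⟪N u, N u⟫ = 1 ∧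
      ⟪B u, B u⟫ = 1 ∧ ⟪t u, T u⟫ = 0 ∧ ⟪t u, N u⟫ = 0 ∧ ⟪t u, B u⟫ = 0 ∧
      ⟪T u, N u⟫ = 0 ∧ ⟪T u, B u⟫ = 0 ∧ ⟪N u, B u⟫ = 0)
    (hdet : ∀ u : ℝ, Matrix.det (Matrix.of ![(t u : Fin 4 → ℝ), T u, N u, B u]) = 1)
    (hDt : ∀ u : ℝ, deriv t u = kg u • T u + k u • N u + kB u • B u)
    (hDT : ∀ u : ℝ, deriv T u = -(kg u) • t u - τN u • N u - τ u • B u)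
    (hDN : ∀ u : ℝ, deriv N u = -(k u) • t u + τN u • T u + τB u • B u)
    (hDB : ∀ u : ℝ, deriv B u = -(kB u) • t u + τ u • T u - τB u • N u)
    (hct : ∀ u : ℝ, deriv c u = t u)
    (hA0 : ∀ u : ℝ, A (u, 0) = 0) (hAb0 : ∀ u : ℝ, Ab (u, 0) = 0)
    (α : ℝ × ℝ → E4)
    (hα : ∀ u v : ℝ, α (u, v) = c u + v • T u +
      (K u * v ^ 2 / 2 + a u * v ^ 3 / 6 + v ^ 3 * A (u, v)) • N u +
      (Kb u * v ^ 2 / 2 + b u * v ^ 3 / 6 + v ^ 3 * Ab (u, v)) • B u) :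
    ∀ u : ℝ,
      ⟪pdu (pdu α) (u, 0), N u⟫ = k u ∧
      ⟪pdv (pdu α) (u, 0), N u⟫ = -τN u ∧
      ⟪pdv (pdv α) (u, 0), N u⟫ = K u ∧
      ⟪pdu (pdu α) (u, 0), B u⟫ = kB u ∧
      ⟪pdv (pdu α) (u, 0), B u⟫ = -τ u ∧
      ⟪pdv (pdv α) (u, 0), B u⟫ = Kb u := by
  have hα' : α = fun p : ℝ × ℝ => c p.1 + p.2 • T p.1 +
      (K p.1 * p.2 ^ 2 / 2 + a p.1 * p.2 ^ 3 / 6 + p.2 ^ 3 * A p) • N p.1 +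
      (Kb p.1 * p.2 ^ 2 / 2 + b p.1 * p.2 ^ 3 / 6 + p.2 ^ 3 * Ab p) • B p.1 := by
    funext p
    exact hα p.1 p.2
  have hαsm : ContDiff ℝ (⊤ : ℕ∞) α := by
    rw [hα']
    fun_prop
  have hd : Differentiable ℝ α := hαsm.differentiable (by simp)
  have hdu : Differentiable ℝ (pdu α) := (contDiff_pdu hαsm).differentiable (by simp)
  have hdv : Differentiable ℝ (pdv α) := (contDiff_pdv hαsm).differentiable (by simp)
  have hu : ∀ u, pdu α (u, 0) = t u := by
    intro u
    rw [← hct u, ← (hasDerivAt_pdu (hd (u, 0))).deriv]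
    congr 1
    funext s
    simp [hα]
  have hv : ∀ u v, pdv α (u, v) = T u
      + (K u * v + v ^ 2 * (a u / 2 + 3 * A (u, v) + v * deriv (fun s => A (u, s)) v)) • N u
      + (Kb u * v + v ^ 2 * (b u / 2 + 3 * Ab (u, v) + v * deriv (fun s => Ab (u, s)) v)) • B u := by
    intro u v
    have hq : ContDiff ℝ (⊤ : ℕ∞) (fun s => A (u, s)) := by fun_prop
    have hqb : ContDiff ℝ (⊤ : ℕ∞) (fun s => Ab (u, s)) := by fun_prop
    have h := ((((hasDerivAt_id v).smul_const (T u)).const_add (c u)).add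
      ((hasDerivAt_coeff (K u) (a u) hq v).smul_const (N u))).add
      ((hasDerivAt_coeff (Kb u) (b u) hqb v).smul_const (B u))
    rw [one_smul] at h
    refine (hasDerivAt_pdv (hd (u, v))).unique (h.congr_of_eventuallyEq ?_)
    exact Filter.Eventually.of_forall fun s => hα u s
  have hv0 : ∀ u, pdv α (u, 0) = T u := by
    intro u
    simp [hv]
  have huu : ∀ u, pdu (pdu α) (u, 0) = deriv t u := by
    intro u
    rw [← (hasDerivAt_pdu (hdu (u, 0))).deriv]
    simp only [hu]
  have huv : ∀ u, pdv (pdu α) (u, 0) = deriv T u := by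
    intro u
    rw [pdv_pdu_comm hαsm, ← (hasDerivAt_pdu (hdv (u, 0))).deriv]
    simp only [hv0]
  have hvv : ∀ u, pdv (pdv α) (u, 0) = K u • N u + Kb u • B u := by
    intro u
    have hq : ContDiff ℝ (⊤ : ℕ∞) (fun s => A (u, s)) := by fun_prop
    have hqb : ContDiff ℝ (⊤ : ℕ∞) (fun s => Ab (u, s)) := by fun_prop
    have h := (((hasDerivAt_coeff_zero (K u) (a u) hq).smul_const (N u)).const_add (T u)).add
      ((hasDerivAt_coeff_zero (Kb u) (b u) hqb).smul_const (B u))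
    refine (hasDerivAt_pdv (hdv (u, 0))).unique (h.congr_of_eventuallyEq ?_)
    exact Filter.Eventually.of_forall fun s => hv u s
  intro u
  obtain ⟨-, -, hNN, hBB, -, htN, htB, hTN, hTB, hNB⟩ := hortho u
  have hBN : ⟪B u, N u⟫ = 0 := by rw [real_inner_comm]; exact hNB
  rw [huu, huv, hvv, hDt, hDT]
  simp only [inner_add_left, inner_sub_left, real_inner_smul_left, hNN, hBB, htN, htB, hTN,
    hTB, hNB, hBN]
  refine ⟨?_, ?_, ?_, ?_, ?_, ?_⟩ <;> ring
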